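/- arXiv:2408.16960 — 3 statements merged into one kernel-verified Lean document; each statement's English description precedes it below -/
import Mathlib

section
/- Let p be a prime, a ≥ 0 and n' ≥ 1 with p ∤ n', and set n = pᵃ · n'. Let q be a power of p and let q₀ be a natural number with q₀ ≡ −q (mod n'). Let ι : ZMod n' → ZMod n be the additive embedding obtained from the Chinese remainder theorem isomorphism ZMod n ≅ ZMod n' × ZMod pᵃ, sending x to the element corresponding to (x, 0). Then for every x ∈ ZMod n' satisfying (q + 1) · x = 0 (equivalently, (−q) · x = x), the image ι(x) satisfies q₀ · ι(x) = ι(x). In particular, ι restricts to an injection from the fixed points of multiplication by −q on ZMod n' into the fixed points of multiplication by q₀ on ZMod n. -/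
/-- The additive embedding `ZMod n' → ZMod (p^a * n')` obtained from the Chinese remainder
theorem isomorphism `ZMod (p^a * n') ≃+* ZMod (p^a) × ZMod n'`, sending `x` to the element
corresponding to `(0, x)` (i.e. to `x` in the `ZMod n'` factor and `0` in the `ZMod p^a`
factor). -/
noncomputable def crtEmbed (p a n' : ℕ) (hcop : Nat.Coprime (p ^ a) n') :
    ZMod n' → ZMod (p ^ a * n') :=
  fun x => (ZMod.chineseRemainder hcop).symm (0, x)

/-- Lemma 2.15: if `q₀ ≡ -q (mod n')`, then every fixed point of multiplication by `-q` on
`ZMod n'` maps under the CRT embedding to a fixed point of multiplication by `q₀` on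
`ZMod (p^a * n')`; moreover this restriction is injective. -/
theorem crtEmbed_fixed_points (p : ℕ) (hp : p.Prime) (a n' : ℕ) (hn' : 0 < n')
    (hpn' : ¬ p ∣ n') (hcop : Nat.Coprime (p ^ a) n')
    (q k : ℕ) (hq : q = p ^ k) (q₀ : ℕ) (hq₀ : (q₀ : ZMod n') = -(q : ZMod n')) :
    (∀ x : ZMod n', ((q : ZMod n') + 1) * x = 0 →
      (q₀ : ZMod (p ^ a * n')) * crtEmbed p a n' hcop x = crtEmbed p a n' hcop x) ∧
    Set.InjOn (crtEmbed p a n' hcop) {x : ZMod n' | ((q : ZMod n') + 1) * x = 0} := by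
  refine ⟨?_, ?_⟩
  · intro x hx
    apply (ZMod.chineseRemainder hcop).injective
    rw [map_mul, map_natCast]
    simp only [crtEmbed, RingEquiv.apply_symm_apply]
    refine Prod.ext ?_ ?_
    · simp
    · simp only [Prod.snd_mul, Prod.snd_natCast]
      rw [hq₀]
      linear_combination -hx
  · intro x _ y _ h
    have h2 := (ZMod.chineseRemainder hcop).symm.injective h
    exact (Prod.ext_iff.mp h2).2
end

section
/- Let K be a field, ι a finite index type, and b : ι → β a function into a linearly ordered type β (the block labels). Call a matrix P : Matrix ι ι K block-unipotent (with respect to b) if P i j = 0 whenever b j < b i, and whenever b i = b j one has P i j = 1 if i = j and P i j = 0 otherwise; call a matrix Λ block-diagonal if Λ i j = 0 whenever b i ≠ b j. Suppose P and P' are block-unipotent matrices and Λ and Λ' are invertible block-diagonal matrices such that Pᵀ · Λ · P = P'ᵀ · Λ' · P'. Then P = P' and Λ = Λ'. -/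
/-- A matrix is block-unipotent with respect to a block labelling `b : ι → β`:
block-wise upper triangular (entries vanish when the column label is strictly smaller
than the row label) and the diagonal blocks are identity matrices. -/
def IsBlockUnipotent {K ι β : Type*} [Zero K] [One K] [DecidableEq ι] [LT β]
    (b : ι → β) (P : Matrix ι ι K) : Prop :=
  (∀ i j, b j < b i → P i j = 0) ∧
  (∀ i j, b i = b j → P i j = if i = j then 1 else 0)

/-- A matrix is block-diagonal with respect to a block labelling `b : ι → β`:
entries vanish whenever the row and column labels differ. -/
def IsBlockDiagonalWrt {K ι β : Type*} [Zero K] (b : ι → β) (Λ : Matrix ι ι K) : Prop :=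
  ∀ i j, b i ≠ b j → Λ i j = 0

theorem IsBlockUnipotent.aux_det {K ι β : Type*} [Field K] [Fintype ι]
    [DecidableEq ι] [LinearOrder β] {b : ι → β} {P : Matrix ι ι K}
    (hP : IsBlockUnipotent b P) : P.det = 1 := by
  have hT : P.BlockTriangular b := fun i j h => hP.1 i j h
  rw [hT.det]
  refine Finset.prod_eq_one fun a _ => ?_
  have : P.toSquareBlock b a = 1 := by
    ext i j
    have := hP.2 i.1 j.1 (i.2.trans j.2.symm)
    simp only [Matrix.toSquareBlock_def, Matrix.of_apply, this, Matrix.one_apply, Subtype.ext_iff]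
  rw [this, Matrix.det_one]

/-- Uniqueness of the solution of Lusztig's matrix equation `ᵗP Λ P = Ω`
(equations (1.16.3)/(1.16.4)): if `P, P'` are block-unipotent and `Λ, Λ'` are invertible
block-diagonal matrices with `ᵗP Λ P = ᵗP' Λ' P'`, then `P = P'` and `Λ = Λ'`. -/
theorem block_unipotent_factorization_unique {K ι β : Type*} [Field K] [Fintype ι]
    [DecidableEq ι] [LinearOrder β] (b : ι → β) (P P' Λ Λ' : Matrix ι ι K)
    (hP : IsBlockUnipotent b P) (hP' : IsBlockUnipotent b P')
    (hΛ : IsBlockDiagonalWrt b Λ) (hΛ' : IsBlockDiagonalWrt b Λ')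
    (hΛu : IsUnit Λ) (hΛ'u : IsUnit Λ')
    (heq : P.transpose * Λ * P = P'.transpose * Λ' * P') :
    P = P' ∧ Λ = Λ' := by
  have dP := hP.aux_det
  have uP : IsUnit P.det := by rw [dP]; exact isUnit_one
  have tP : P.BlockTriangular b := fun i j h => hP.1 i j h
  have tP' : P'.BlockTriangular b := fun i j h => hP'.1 i j h
  have tPi : P⁻¹.BlockTriangular b := by
    haveI := Matrix.invertibleOfIsUnitDet P uP
    exact Matrix.blockTriangular_inv_of_blockTriangular tP
  obtain ⟨Q, hQ⟩ : ∃ Q, Q = P' * P⁻¹ := ⟨_, rfl⟩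
  have tQ : Q.BlockTriangular b := hQ ▸ tP'.mul tPi
  have hQP : Q * P = P' := by
    rw [hQ, Matrix.mul_assoc, Matrix.nonsing_inv_mul _ uP, Matrix.mul_one]
  have hQ2 : IsBlockUnipotent b Q := by
    refine ⟨fun i j h => tQ h, fun i j h => ?_⟩
    rw [← hP'.2 i j h, ← hQP, Matrix.mul_apply, Finset.sum_eq_single j]
    · rw [hP.2 j j rfl]; simp
    · intro k _ hk
      rcases lt_trichotomy (b k) (b i) with h1 | h1 | h1
      · rw [tQ h1, zero_mul]
      · rw [hP.2 k j (h1.trans h), if_neg hk, mul_zero]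
      · rw [hP.1 k j (h ▸ h1), mul_zero]
    · simp
  have uQ : IsUnit Q.det := by rw [hQ2.aux_det]; exact isUnit_one
  have tQi : Q⁻¹.BlockTriangular b := by
    haveI := Matrix.invertibleOfIsUnitDet Q uQ
    exact Matrix.blockTriangular_inv_of_blockTriangular tQ
  have PU : IsUnit P := (Matrix.isUnit_iff_isUnit_det P).2 uP
  have PTU : IsUnit P.transpose :=
    (Matrix.isUnit_iff_isUnit_det _).2 (by rwa [Matrix.det_transpose])
  have e1 : Λ = Q.transpose * Λ' * Q := by
    apply PTU.mul_left_cancel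
    apply PU.mul_right_cancel
    rw [heq, ← hQP, Matrix.transpose_mul]
    simp only [Matrix.mul_assoc]
  have e2 : Λ * Q⁻¹ = Q.transpose * Λ' := by
    rw [e1, Matrix.mul_assoc, Matrix.mul_nonsing_inv _ uQ, Matrix.mul_one]
  have tΛ : Λ.BlockTriangular b := fun i j h => hΛ i j h.ne'
  have e3 : Q.transpose * Λ' = Λ' := by
    ext i j
    rcases lt_trichotomy (b j) (b i) with h | h | h
    · rw [hΛ' i j h.ne', ← e2]
      exact (tΛ.mul tQi) h
    · rw [Matrix.mul_apply, Finset.sum_eq_single i]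
      · rw [Matrix.transpose_apply, hQ2.2 i i rfl]; simp
      · intro k _ hk
        by_cases h1 : b k = b j
        · rw [Matrix.transpose_apply, hQ2.2 k i (h1.trans h), if_neg hk, zero_mul]
        · rw [hΛ' k j h1, mul_zero]
      · simp
    · rw [hΛ' i j h.ne, Matrix.mul_apply]
      refine Finset.sum_eq_zero fun k _ => ?_
      by_cases h1 : b k = b j
      · rw [Matrix.transpose_apply, hQ2.1 k i (h1 ▸ h), zero_mul]
      · rw [hΛ' k j h1, mul_zero]
  have e4 : Q.transpose = 1 := by
    apply hΛ'u.mul_right_cancel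
    rw [e3, Matrix.one_mul]
  have e5 : Q = 1 := by
    rw [← Matrix.transpose_transpose Q, e4, Matrix.transpose_one]
  constructor
  · rw [← hQP, e5, Matrix.one_mul]
  · rw [e1, e3, e5, Matrix.mul_one]
end

section
/- Let G be a finite group, N a normal subgroup of G, and t ∈ G an element whose image generates the quotient group G/N. Let x and y be elements of the coset N·t. If for every representation ρ of G on a finite-dimensional complex vector space one has trace ρ(x) = trace ρ(y), then there exists n ∈ N with n·x·n⁻¹ = y. -/
open MonoidAlgebra in
theorem aux_central_zero {G : Type} [Group G] [Fintype G] (z : MonoidAlgebra ℂ G)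
    (hz : ∀ a, z * a = a * z)
    (hev : ∀ (μ : ℂ) (v : MonoidAlgebra ℂ G), v ≠ 0 → z * v = μ • v → μ = 0) : z = 0 := by
  have : NeZero (Nat.card G : ℂ) := ⟨by exact_mod_cast Nat.card_pos.ne'⟩
  have : FiniteDimensional ℂ (MonoidAlgebra ℂ G) :=
    Module.Finite.equiv (MonoidAlgebra.coeffLinearEquiv ℂ : MonoidAlgebra ℂ G ≃ₗ[ℂ] (G →₀ ℂ)).symm
  by_contra hne
  obtain ⟨J, hJ⟩ := exists_isCompl (Submodule.span (MonoidAlgebra ℂ G) {z})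
  have h1 : (1 : MonoidAlgebra ℂ G) ∈ Submodule.span (MonoidAlgebra ℂ G) {z} ⊔ J := by
    rw [hJ.sup_eq_top]; trivial
  obtain ⟨w, hw, j, hj, hwj⟩ := Submodule.mem_sup.mp h1
  obtain ⟨a, rfl⟩ := Submodule.mem_span_singleton.mp hw
  simp only [smul_eq_mul] at hwj
  have hvn : z = a * z * z := by
    have e : z * j = z - a * z * z := by
      have : z * (a * z + j) = z := by rw [hwj, mul_one]
      rw [mul_add, hz (a * z)] at this
      exact eq_sub_of_add_eq' this
    have m1 : z * j ∈ J := J.smul_mem z hj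
    have m2 : z * j ∈ Submodule.span (MonoidAlgebra ℂ G) {z} := by
      rw [hz]; exact Submodule.mem_span_singleton.mpr ⟨j, rfl⟩
    have := (Submodule.disjoint_def.mp hJ.disjoint) _ m2 m1
    rw [e] at this
    exact sub_eq_zero.mp this
  let L := LinearMap.mulLeft ℂ z
  have hst : ∀ v ∈ LinearMap.range L, L v ∈ LinearMap.range L := fun v _ => ⟨v, rfl⟩
  have : Nontrivial (LinearMap.range L) := by
    refine ⟨⟨⟨z, ⟨1, by simp [L]⟩⟩, 0, ?_⟩⟩
    intro h; exact hne (congrArg Subtype.val h)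
  obtain ⟨μ, hμ⟩ := Module.End.exists_eigenvalue (L.restrict hst)
  obtain ⟨⟨v, ⟨u, hu⟩⟩, hv⟩ := hμ.exists_hasEigenvector
  have hv1 := congrArg Subtype.val hv.apply_eq_smul
  have hv0 : v ≠ 0 := fun h => hv.2 (Subtype.ext h)
  have hv2 : z * v = μ • v := hv1
  have h0 := hev μ v hv0 hv2
  have hu' : z * u = v := hu
  rw [h0, zero_smul] at hv2
  apply hv0
  rw [← hu', hvn, mul_assoc, mul_assoc, hu', hv2, mul_zero]

theorem aux_trace {G V : Type} [Group G] [Fintype G] (x y : G) [AddCommGroup V] [Module ℂ V]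
    [FiniteDimensional ℂ V] (ρ : Representation ℂ G V)
    (htr : LinearMap.trace ℂ V (ρ x) = LinearMap.trace ℂ V (ρ y)) (μ : ℂ)
    (hsum : ∑ h : G, (ρ (h * x * h⁻¹) - ρ (h * y * h⁻¹)) = μ • LinearMap.id) :
    μ * (Module.finrank ℂ V : ℂ) = 0 := by
  have hc : ∀ h k : G, LinearMap.trace ℂ V (ρ (h * k * h⁻¹)) = LinearMap.trace ℂ V (ρ k) :=
    fun h k => Representation.char_conj ρ k h
  have ht := congrArg (LinearMap.trace ℂ V) hsum
  simp only [map_sum, map_sub, hc, htr, sub_self, Finset.sum_const_zero, map_smul,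
    LinearMap.trace_id, smul_eq_mul] at ht
  exact ht.symm

set_option maxHeartbeats 1000000 in
theorem aux_isConj {G : Type} [Group G] [Fintype G] (x y : G)
    (htr : ∀ (V : Type) [AddCommGroup V] [Module ℂ V] [FiniteDimensional ℂ V]
      (ρ : Representation ℂ G V),
      LinearMap.trace ℂ V (ρ x) = LinearMap.trace ℂ V (ρ y)) :
    ∃ g : G, g * x * g⁻¹ = y := by
  classical
  have : FiniteDimensional ℂ (MonoidAlgebra ℂ G) :=
    Module.Finite.equiv (MonoidAlgebra.coeffLinearEquiv ℂ : MonoidAlgebra ℂ G ≃ₗ[ℂ] (G →₀ ℂ)).symm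
  let s : G →* MonoidAlgebra ℂ G := MonoidAlgebra.of ℂ G
  let z : MonoidAlgebra ℂ G := ∑ h : G, (s (h * x * h⁻¹) - s (h * y * h⁻¹))
  have hzg : ∀ g, s g * z = z * s g := by
    intro g
    simp only [z, Finset.mul_sum, Finset.sum_mul]
    refine Fintype.sum_equiv (Equiv.mulLeft g) _ _ fun h => ?_
    simp only [mul_sub, sub_mul, ← map_mul, Equiv.coe_mulLeft]
    congr 2 <;> group
  have hz : ∀ a, z * a = a * z := by
    intro a
    induction a using MonoidAlgebra.induction_on with
    | of g => exact (hzg g).symm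
    | add p q hp hq => rw [mul_add, add_mul, hp, hq]
    | smul r p hp => rw [mul_smul_comm, smul_mul_assoc, hp]
  have hz0 : z = 0 := by
    refine aux_central_zero z hz fun μ v hv hzv => ?_
    let W : Submodule ℂ (MonoidAlgebra ℂ G) := Module.End.eigenspace (LinearMap.mulLeft ℂ z) μ
    have hW : ∀ w, w ∈ W ↔ z * w = μ • w := fun w => Module.End.mem_eigenspace_iff
    have hst : ∀ g, ∀ w ∈ W, LinearMap.mulLeft ℂ (s g) w ∈ W := by
      intro g w hw
      rw [hW] at hw ⊢
      rw [LinearMap.mulLeft_apply, ← mul_assoc, ← hzg, mul_assoc, hw, mul_smul_comm]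
    let ρ : Representation ℂ G W :=
      { toFun := fun g => (LinearMap.mulLeft ℂ (s g)).restrict (hst g)
        map_one' := by ext w; simp
        map_mul' := by intro g h; ext w; simp [mul_assoc] }
    have hρ : ∀ g (w : W), ((ρ g w : W) : MonoidAlgebra ℂ G) = s g * w := fun _ _ => rfl
    clear_value ρ
    have hsum : ∑ h : G, (ρ (h * x * h⁻¹) - ρ (h * y * h⁻¹)) = μ • LinearMap.id := by
      apply LinearMap.ext
      intro w
      apply Subtype.ext
      have := (hW w).1 w.2
      simp only [z, Finset.sum_mul, sub_mul] at this
      rw [LinearMap.sum_apply, Submodule.coe_sum, LinearMap.smul_apply, Submodule.coe_smul,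
        LinearMap.id_apply, ← this]
      refine Finset.sum_congr rfl fun h _ => ?_
      rw [LinearMap.sub_apply, Submodule.coe_sub, hρ, hρ]
    have ht := aux_trace x y ρ (htr W ρ) μ hsum
    have : Nontrivial W := ⟨⟨⟨v, (hW v).2 hzv⟩, 0, fun h => hv (congrArg Subtype.val h)⟩⟩
    have hpos : (Module.finrank ℂ W : ℂ) ≠ 0 := by
      exact_mod_cast (Module.finrank_pos (R := ℂ) (M := W)).ne'
    exact (mul_eq_zero.mp ht).resolve_right hpos
  by_contra! hcon
  have hcy := congrArg (fun a : MonoidAlgebra ℂ G => a.coeff y) hz0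
  simp only [z, s, MonoidAlgebra.coeff_sum, MonoidAlgebra.of_apply, MonoidAlgebra.coeff_sub,
    Finsupp.finsetSum_apply, Finsupp.sub_apply, MonoidAlgebra.coeff_single,
    Finsupp.single_apply, hcon, if_false, MonoidAlgebra.coeff_zero, Finsupp.zero_apply,
    Finset.sum_sub_distrib, Finset.sum_const_zero, zero_sub, neg_eq_zero, Finset.sum_boole] at hcy
  have : (Finset.univ.filter fun h : G => h * y * h⁻¹ = y) = ∅ := by
    rw [← Finset.card_eq_zero]; exact_mod_cast hcy
  have h1 : (1 : G) ∈ (Finset.univ.filter fun h : G => h * y * h⁻¹ = y) := by simp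
  rw [this] at h1
  simp at h1

/-- Orthogonality of twisted class functions (used in Lemma 1.9): if `N` is a normal
subgroup of a finite group `G` with cyclic quotient generated by the image of `t`, and
`x, y ∈ N·t` have equal traces in every finite-dimensional complex representation of `G`,
then `x` and `y` are conjugate by an element of `N`. -/
theorem conj_in_coset_of_trace_eq {G : Type} [Group G] [Fintype G] (N : Subgroup G)
    [N.Normal] (t : G)
    (hgen : ∀ g : G ⧸ N, g ∈ Subgroup.zpowers (QuotientGroup.mk t : G ⧸ N))
    (x y : G) (hx : x * t⁻¹ ∈ N) (hy : y * t⁻¹ ∈ N)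
    (htr : ∀ (V : Type) [AddCommGroup V] [Module ℂ V] [FiniteDimensional ℂ V]
      (ρ : Representation ℂ G V),
      LinearMap.trace ℂ V (ρ x) = LinearMap.trace ℂ V (ρ y)) :
    ∃ n ∈ N, n * x * n⁻¹ = y := by
  obtain ⟨g, hg⟩ := aux_isConj x y htr
  have hxt : (QuotientGroup.mk t : G ⧸ N) = QuotientGroup.mk x := by
    have := (QuotientGroup.eq_one_iff (N := N) (x * t⁻¹)).2 hx
    rw [QuotientGroup.mk_mul, QuotientGroup.mk_inv] at this
    exact (mul_inv_eq_one.mp this).symm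
  obtain ⟨k, hk⟩ := Subgroup.mem_zpowers_iff.mp (hgen (QuotientGroup.mk g))
  refine ⟨g * (x ^ k)⁻¹, ?_, ?_⟩
  · rw [← QuotientGroup.eq_one_iff, QuotientGroup.mk_mul, QuotientGroup.mk_inv,
      QuotientGroup.mk_zpow, ← hxt, hk, mul_inv_cancel]
  · rw [← hg]
    have : (x ^ k)⁻¹ * x * x ^ k = x := by group
    calc g * (x ^ k)⁻¹ * x * (g * (x ^ k)⁻¹)⁻¹ = g * ((x ^ k)⁻¹ * x * x ^ k) * g⁻¹ := by
          simp only [mul_inv_rev, inv_inv, mul_assoc]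
      _ = g * x * g⁻¹ := by rw [this]
end
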